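/- arXiv:1112.3820 — 2 statements merged into one kernel-verified Lean document; each statement's English description precedes it below -/
import Mathlib

section
/- Let f ∈ ℤ[x] be a nonzero polynomial of degree r ≥ 1. Then there exist constants B and C depending only on f such that Σ_{n ≤ N} Σ_{d | f(n), d ≤ N} 1 ≪ N (log N)^B, using that the number of solutions x mod d to f(x) ≡ 0 (mod d) is at most (deg f)^{ω(d)} for squarefree d; consequently, for every A > 0 there is a constant C = C(A, f) such that the number of integers 1 ≤ n ≤ N with ω(f(n)) ≥ C·log log N is O_A(N (log N)^{−A}). -/
/-!
Fix `f` of degree `r` with leading coefficient `a`. Splitting off one root `x₀` of `f` modulo `d`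
as `f = f(x₀) + (X - x₀) g`, any other root `x` satisfies `d / gcd(d, x - x₀) ∣ g(x)`; iterating,
every root acquires a label `d = e t₁ ⋯ tᵣ` with `e ∣ a`, and roots with equal labels are congruent
modulo `lcm(t₁, …, tᵣ)`. Hence the divisor sum is at most `2 τ(a) N ∑_{m ≤ N} τ(m)ʳ / m`, and
submultiplicativity of `τ` bounds this last sum by `(∑_{m ≤ N} 1 / m) ^ 2ʳ`. This treats all moduli
`d` uniformly, with no reduction to squarefree ones.

For the second claim, `|f(n)| < N ^ (r + 1)` for large `N`, so among any `(r + 1) k` prime factors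
of `f(n)` some `k` have product at most `N`. Their `2 ^ k` subproducts are divisors of `f(n)` up
to `N`, and the first claim limits how often this can happen.
-/

section

open Asymptotics Filter Finset Polynomial

theorem card_le_div_add_one_of_pairwise_modEq {N m : ℕ} {S : Finset ℕ} (hS : S ⊆ Icc 1 N)
    (hmod : ∀ x ∈ S, ∀ y ∈ S, x ≡ y [MOD m]) : #S ≤ N / m + 1 := by
  rw [← card_range (N / m + 1)]
  refine card_le_card_of_injOn (· / m) (fun x hx => ?_) fun x hx y hy hxy => ?_
  · have hxN := (mem_Icc.mp (hS hx)).2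
    simpa [Nat.lt_succ_iff] using Nat.div_le_div_right hxN
  · rw [← Nat.div_add_mod x m, ← Nat.div_add_mod y m, hmod x hx y hy]
    exact congrArg (m * · + y % m) hxy

theorem card_le_two_mul_div_of_pairwise_modEq {N m : ℕ} (hm : 0 < m) (hmN : m ≤ N) {S : Finset ℕ}
    (hS : S ⊆ Icc 1 N) (hmod : ∀ x ∈ S, ∀ y ∈ S, x ≡ y [MOD m]) : (#S : ℝ) ≤ 2 * N / m := by
  rw [le_div_iff₀ (by exact_mod_cast hm)]
  norm_cast
  calc #S * m ≤ (N / m + 1) * m := by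
        gcongr
        exact card_le_div_add_one_of_pairwise_modEq hS hmod
    _ = N / m * m + m := Nat.succ_mul _ m
    _ ≤ N + N := Nat.add_le_add (Nat.div_mul_le_self N m) hmN
    _ = 2 * N := (two_mul N).symm

theorem card_divisors_mul_le (a b : ℕ) : #(a * b).divisors ≤ #a.divisors * #b.divisors := by
  rw [Nat.divisors_mul]
  exact card_mul_le

theorem sum_card_divisors_mul_le_sq {R : Type*} [CommSemiring R] [PartialOrder R]
    [IsOrderedRing R] {h : ℕ → R} (h_nonneg : ∀ n, 0 ≤ h n)
    (h_mul : ∀ a b, h (a * b) ≤ h a * h b) (N : ℕ) :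
    ∑ m ∈ Icc 1 N, #m.divisors * h m ≤ (∑ m ∈ Icc 1 N, h m) ^ 2 := by
  have card_eq (m : ℕ) (hm : m ∈ Icc 1 N) :
      #m.divisors = #{p ∈ Icc 1 N ×ˢ Icc 1 N | p.1 * p.2 = m} := by
    obtain ⟨hm1, hmN⟩ := mem_Icc.mp hm
    have hfilter := Nat.divisorsAntidiagonal_eq_prod_filter_of_le (Nat.ne_of_gt hm1) hmN
    rw [← Icc_add_one_left_eq_Ioc, zero_add] at hfilter
    rw [← hfilter, ← Nat.map_div_right_divisors, card_map]
  calc ∑ m ∈ Icc 1 N, #m.divisors * h m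
      = ∑ m ∈ Icc 1 N, ∑ p ∈ Icc 1 N ×ˢ Icc 1 N with p.1 * p.2 = m, h m :=
        sum_congr rfl fun m hm => by rw [sum_const, nsmul_eq_mul, card_eq m hm]
    _ ≤ ∑ m ∈ Icc 1 N, ∑ p ∈ Icc 1 N ×ˢ Icc 1 N with p.1 * p.2 = m, h p.1 * h p.2 :=
        sum_le_sum fun m _ => sum_le_sum fun p hp => (mem_filter.mp hp).2 ▸ h_mul p.1 p.2
    _ = ∑ p ∈ Icc 1 N ×ˢ Icc 1 N with p.1 * p.2 ∈ Icc 1 N, h p.1 * h p.2 :=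
        sum_fiberwise_eq_sum_filter ..
    _ ≤ ∑ p ∈ Icc 1 N ×ˢ Icc 1 N, h p.1 * h p.2 :=
        sum_le_sum_of_subset_of_nonneg (filter_subset _ _) fun p _ _ =>
          mul_nonneg (h_nonneg p.1) (h_nonneg p.2)
    _ = (∑ m ∈ Icc 1 N, h m) ^ 2 := by rw [sum_product, sq, sum_mul_sum]

theorem sum_card_divisors_pow_div_le (N k : ℕ) :
    ∑ m ∈ Icc 1 N, (#m.divisors : ℝ) ^ k / m ≤ (∑ m ∈ Icc 1 N, (m : ℝ)⁻¹) ^ 2 ^ k := by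
  induction k with
  | zero => simp
  | succ k ih =>
    have submul (a b : ℕ) : (#(a * b).divisors : ℝ) ^ k / (a * b : ℕ) ≤
        #a.divisors ^ k / a * (#b.divisors ^ k / b) := by
      rw [div_mul_div_comm, ← mul_pow, Nat.cast_mul]
      gcongr
      exact_mod_cast card_divisors_mul_le a b
    calc ∑ m ∈ Icc 1 N, (#m.divisors : ℝ) ^ (k + 1) / m
        = ∑ m ∈ Icc 1 N, #m.divisors * ((#m.divisors : ℝ) ^ k / m) :=
          sum_congr rfl fun m _ => by ring
      _ ≤ (∑ m ∈ Icc 1 N, (#m.divisors : ℝ) ^ k / m) ^ 2 :=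
          sum_card_divisors_mul_le_sq (fun m => by positivity) submul N
      _ ≤ ((∑ m ∈ Icc 1 N, (m : ℝ)⁻¹) ^ 2 ^ k) ^ 2 := by gcongr
      _ = (∑ m ∈ Icc 1 N, (m : ℝ)⁻¹) ^ 2 ^ (k + 1) := by rw [pow_succ 2, pow_mul]

theorem sum_inv_lcm_le {ι : Type*} [Fintype ι] (T : Finset (ι → ℕ)) (N : ℕ) :
    ∑ t ∈ T with univ.lcm t ∈ Icc 1 N, ((univ.lcm t : ℕ) : ℝ)⁻¹ ≤
      ∑ m ∈ Icc 1 N, (#m.divisors : ℝ) ^ Fintype.card ι / m := by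
  classical
  rw [← sum_fiberwise_eq_sum_filter]
  refine sum_le_sum fun m hm => ?_
  have hfiber : #{t ∈ T | univ.lcm t = m} ≤ #m.divisors ^ Fintype.card ι := by
    rw [← card_univ, ← prod_const, ← Fintype.card_piFinset]
    refine card_le_card fun t ht => ?_
    obtain ⟨-, rfl⟩ := mem_filter.mp ht
    have hpos : univ.lcm t ≠ 0 := Nat.ne_of_gt (mem_Icc.mp hm).1
    exact Fintype.mem_piFinset.mpr fun i => Nat.mem_divisors.mpr ⟨dvd_lcm (mem_univ i), hpos⟩
  calc ∑ t ∈ T with univ.lcm t = m, ((univ.lcm t : ℕ) : ℝ)⁻¹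
      = #{t ∈ T | univ.lcm t = m} * (m : ℝ)⁻¹ := by
        rw [← nsmul_eq_mul, ← sum_const]
        exact sum_congr rfl fun t ht => by rw [(mem_filter.mp ht).2]
    _ ≤ (#m.divisors : ℝ) ^ Fintype.card ι / m := by
        rw [div_eq_mul_inv]
        gcongr
        exact_mod_cast hfiber

theorem eval_eq_add_sub_mul_eval_divByMonic {R : Type*} [CommRing R] (f : R[X]) (x₀ x : R) :
    f.eval x = f.eval x₀ + (x - x₀) * (f /ₘ (X - C x₀)).eval x := by
  have hdiv := congrArg (eval x) (modByMonic_add_div f (X - C x₀))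
  rw [modByMonic_X_sub_C_eq_C_eval, eval_add, eval_mul, eval_sub, eval_X, eval_C, eval_C] at hdiv
  exact hdiv.symm

theorem div_gcd_dvd_eval_divByMonic {f : ℤ[X]} {d : ℕ} {x₀ x : ℤ} (hd : 0 < d)
    (hx₀ : (d : ℤ) ∣ f.eval x₀) (hx : (d : ℤ) ∣ f.eval x) :
    ((d / Int.gcd d (x - x₀) : ℕ) : ℤ) ∣ (f /ₘ (X - C x₀)).eval x := by
  rw [eval_eq_add_sub_mul_eval_divByMonic f x₀, dvd_add_right hx₀, Int.natCast_dvd,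
    Int.natAbs_mul] at hx
  have hgcd : Int.gcd d (x - x₀) = Nat.gcd d (x - x₀).natAbs := rfl
  rw [Int.natCast_dvd, Nat.div_dvd_iff_dvd_mul (Int.natCast_dvd_natCast.mp (Int.gcd_dvd_left ..))
    (Int.gcd_pos_of_ne_zero_left _ (by omega)), hgcd]
  exact dvd_gcd_mul_of_dvd_mul hx

theorem exists_rootLabel {f : ℤ[X]} (hf : f ≠ 0) {r : ℕ} (hr : f.natDegree = r) {d : ℕ}
    (hd : 0 < d) : ∃ F : ℤ → ℕ × (Fin r → ℕ), ∀ x : ℤ, (d : ℤ) ∣ f.eval x →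
      (F x).1 ∣ f.leadingCoeff.natAbs ∧ (F x).1 * ∏ i, (F x).2 i = d ∧
        ∀ y : ℤ, (d : ℤ) ∣ f.eval y → F x = F y → ∀ i, x ≡ y [ZMOD (F x).2 i] := by
  induction r generalizing f d with
  | zero =>
    refine ⟨fun _ => (d, ![]), fun x hx => ⟨?_, by simp, fun y _ _ i => i.elim0⟩⟩
    rw [eq_C_of_natDegree_eq_zero hr] at hx ⊢
    rwa [leadingCoeff_C, ← Int.natCast_dvd, ← eval_C (x := x) (a := f.coeff 0)]
  | succ r ih =>
    by_cases hroot : ∃ x₀ : ℤ, (d : ℤ) ∣ f.eval x₀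
    swap
    · exact ⟨fun _ => (1, 1), fun x hx => absurd ⟨x, hx⟩ hroot⟩
    obtain ⟨x₀, hx₀⟩ := hroot
    set g := f /ₘ (X - C x₀)
    have hlc : g.leadingCoeff = f.leadingCoeff :=
      leadingCoeff_divByMonic_X_sub_C f (degree_ne_of_natDegree_ne (hr ▸ r.succ_ne_zero)) x₀
    have hg : g ≠ 0 := by rwa [← leadingCoeff_ne_zero, hlc, leadingCoeff_ne_zero]
    have hgr : g.natDegree = r := by
      rw [natDegree_divByMonic _ (monic_X_sub_C x₀), hr, natDegree_X_sub_C, Nat.add_sub_cancel]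
    choose! G hG using fun (d : ℕ) (hd : 0 < d) => ih hg hgr hd
    let c (x : ℤ) : ℕ := Int.gcd d (x - x₀)
    have hcd (x : ℤ) : c x ∣ d := Int.natCast_dvd_natCast.mp (Int.gcd_dvd_left ..)
    have hquot (x : ℤ) : 0 < d / c x :=
      Nat.div_pos (Nat.le_of_dvd hd (hcd x)) (Nat.pos_of_dvd_of_pos (hcd x) hd)
    refine ⟨fun x => ((G (d / c x) x).1, Fin.cons (c x) (G (d / c x) x).2), fun x hx => ?_⟩
    obtain ⟨he, hprod, hcongr⟩ := hG _ (hquot x) x (div_gcd_dvd_eval_divByMonic hd hx₀ hx)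
    refine ⟨hlc ▸ he, ?_, fun y hy hxy => ?_⟩
    · simp only [Fin.prod_univ_succ, Fin.cons_zero, Fin.cons_succ]
      rw [mul_left_comm, hprod, Nat.mul_div_cancel' (hcd x)]
    · obtain ⟨h_fst, h_snd⟩ := Prod.mk.inj hxy
      obtain ⟨hc, h_tail⟩ := Fin.cons_inj.mp h_snd
      have hgy : ((d / c x : ℕ) : ℤ) ∣ g.eval y :=
        hc ▸ div_gcd_dvd_eval_divByMonic hd hx₀ hy
      refine Fin.cases ?_ fun j => ?_
      · have hx' : x ≡ x₀ [ZMOD c x] := (Int.modEq_iff_dvd.mpr (Int.gcd_dvd_right ..)).symm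
        have hy' : y ≡ x₀ [ZMOD c x] := hc ▸ (Int.modEq_iff_dvd.mpr (Int.gcd_dvd_right ..)).symm
        exact hx'.trans hy'.symm
      · rw [← hc] at h_fst h_tail
        exact hcongr y hgy (Prod.ext h_fst h_tail) j

/-- The pairs `(e, t)` with `e ∣ a` and `t ∈ [1, N]ʳ`: the labels available to the roots, modulo
some `d ≤ N`, of a polynomial of degree `r` with leading coefficient `±a`. The modulus is recovered
from the label as `e * ∏ i, t i`. -/
def rootLabels (a r N : ℕ) : Finset (ℕ × (Fin r → ℕ)) :=
  a.divisors ×ˢ Fintype.piFinset fun _ => Icc 1 N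

theorem card_roots_le_sum_rootLabels {f : ℤ[X]} (hf : f ≠ 0) {d N : ℕ} (hd : d ∈ Icc 1 N) :
    (#{n ∈ Icc 1 N | (d : ℤ) ∣ f.eval ((n : ℕ) : ℤ)} : ℝ) ≤
      ∑ q ∈ rootLabels f.leadingCoeff.natAbs f.natDegree N with q.1 * ∏ i, q.2 i = d,
        2 * N / ((univ.lcm q.2 : ℕ) : ℝ) := by
  obtain ⟨hd1, hdN⟩ := mem_Icc.mp hd
  obtain ⟨F, hF⟩ := exists_rootLabel hf rfl hd1
  have maps (n : ℕ) (hn : n ∈ ({n ∈ Icc 1 N | (d : ℤ) ∣ f.eval ((n : ℕ) : ℤ)} : Finset ℕ)) :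
      F n ∈ ({q ∈ rootLabels f.leadingCoeff.natAbs f.natDegree N | q.1 * ∏ i, q.2 i = d} :
        Finset _) := by
    obtain ⟨he, hprod, -⟩ := hF n (mem_filter.mp hn).2
    refine mem_filter.mpr ⟨mem_product.mpr ⟨?_, Fintype.mem_piFinset.mpr fun i => ?_⟩, hprod⟩
    · exact Nat.mem_divisors.mpr ⟨he, by simpa using hf⟩
    · have hi : (F n).2 i ∣ d := (dvd_prod_of_mem _ (mem_univ i)).trans (Dvd.intro_left _ hprod)
      exact mem_Icc.mpr ⟨Nat.pos_of_dvd_of_pos hi hd1, (Nat.le_of_dvd hd1 hi).trans hdN⟩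
  rw [card_eq_sum_card_fiberwise maps, Nat.cast_sum]
  refine sum_le_sum fun q hq => ?_
  have hlcm : univ.lcm q.2 ∣ d := by
    rw [← (mem_filter.mp hq).2]
    exact (lcm_dvd fun i hi => dvd_prod_of_mem _ hi).mul_left _
  refine card_le_two_mul_div_of_pairwise_modEq (Nat.pos_of_dvd_of_pos hlcm hd1)
    ((Nat.le_of_dvd hd1 hlcm).trans hdN) (fun n hn => ?_) fun x hx y hy => ?_
  · exact (mem_filter.mp (mem_filter.mp hn).1).1
  · simp only [mem_filter] at hx hy
    have hcongr := (hF x hx.1.2).2.2 y hy.1.2 (hx.2.trans hy.2.symm)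
    rw [hx.2] at hcongr
    refine (Nat.modEq_iff_dvd.mpr (Int.natCast_dvd.mpr (lcm_dvd fun i _ => ?_)))
    exact Int.natCast_dvd.mp (hcongr i).dvd

theorem sum_rootLabels_inv_lcm_le (a r N : ℕ) :
    ∑ q ∈ rootLabels a r N with q.1 * ∏ i, q.2 i ∈ Icc 1 N, ((univ.lcm q.2 : ℕ) : ℝ)⁻¹ ≤
      #a.divisors * ∑ m ∈ Icc 1 N, (#m.divisors : ℝ) ^ r / m := by
  set T : Finset (Fin r → ℕ) := Fintype.piFinset fun _ => Icc 1 N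
  calc ∑ q ∈ rootLabels a r N with q.1 * ∏ i, q.2 i ∈ Icc 1 N, ((univ.lcm q.2 : ℕ) : ℝ)⁻¹
      ≤ ∑ q ∈ a.divisors ×ˢ {t ∈ T | univ.lcm t ∈ Icc 1 N}, ((univ.lcm q.2 : ℕ) : ℝ)⁻¹ := by
        refine sum_le_sum_of_subset_of_nonneg (fun q hq => ?_) fun q _ _ => by positivity
        simp only [rootLabels, mem_filter, mem_product, mem_Icc] at hq ⊢
        have hdvd : univ.lcm q.2 ∣ q.1 * ∏ i, q.2 i :=
          (lcm_dvd fun i hi => dvd_prod_of_mem _ hi).mul_left _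
        exact ⟨hq.1.1, hq.1.2, Nat.pos_of_dvd_of_pos hdvd hq.2.1,
          (Nat.le_of_dvd hq.2.1 hdvd).trans hq.2.2⟩
    _ = #a.divisors * ∑ t ∈ T with univ.lcm t ∈ Icc 1 N, ((univ.lcm t : ℕ) : ℝ)⁻¹ := by
        simp only [sum_product, sum_const, nsmul_eq_mul]
    _ ≤ #a.divisors * ∑ m ∈ Icc 1 N, (#m.divisors : ℝ) ^ r / m := by
        gcongr
        simpa only [Fintype.card_fin] using sum_inv_lcm_le T N

theorem sum_card_roots_le {f : ℤ[X]} (hf : f ≠ 0) (N : ℕ) :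
    ∑ d ∈ Icc 1 N, (#{n ∈ Icc 1 N | (d : ℤ) ∣ f.eval ((n : ℕ) : ℤ)} : ℝ) ≤
      2 * N * (#f.leadingCoeff.natAbs.divisors *
        ∑ m ∈ Icc 1 N, (#m.divisors : ℝ) ^ f.natDegree / m) := by
  refine (sum_le_sum fun d hd => card_roots_le_sum_rootLabels hf hd).trans ?_
  rw [sum_fiberwise_eq_sum_filter]
  simp only [div_eq_mul_inv (2 * (N : ℝ)), ← mul_sum]
  gcongr
  exact sum_rootLabels_inv_lcm_le ..

theorem sum_card_divisors_eval_le_sum_card_roots (f : ℤ[X]) (N : ℕ) :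
    ∑ n ∈ Icc 1 N, #{d ∈ (f.eval (n : ℤ)).natAbs.divisors | d ≤ N} ≤
      ∑ d ∈ Icc 1 N, #{n ∈ Icc 1 N | (d : ℤ) ∣ f.eval ((n : ℕ) : ℤ)} := by
  refine (sum_le_sum fun n _ => card_le_card fun d hd => ?_).trans
    (sum_card_bipartiteAbove_eq_sum_card_bipartiteBelow
      fun n d : ℕ => (d : ℤ) ∣ f.eval (n : ℤ)).le
  obtain ⟨hdvd, hdN⟩ := mem_filter.mp hd
  exact mem_filter.mpr ⟨mem_Icc.mpr ⟨Nat.pos_of_mem_divisors hdvd, hdN⟩,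
    Int.natCast_dvd.mpr (Nat.dvd_of_mem_divisors hdvd)⟩

theorem tendsto_log_natCast_atTop : Tendsto (fun N : ℕ => Real.log N) atTop atTop :=
  Real.tendsto_log_atTop.comp tendsto_natCast_atTop_atTop

theorem isBigO_sum_inv :
    (fun N : ℕ => ∑ m ∈ Icc 1 N, (m : ℝ)⁻¹) =O[atTop] fun N : ℕ => Real.log N := by
  refine .of_bound 2 ?_
  filter_upwards [tendsto_log_natCast_atTop.eventually_ge_atTop 1] with N hN
  have hharm := harmonic_le_one_add_log N
  rw [harmonic_eq_sum_Icc] at hharm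
  push_cast at hharm
  rw [Real.norm_of_nonneg (by positivity), Real.norm_of_nonneg (by positivity)]
  linarith

theorem sum_card_divisors_eval_le {f : ℤ[X]} (hf : f ≠ 0) (N : ℕ) :
    ∑ n ∈ Icc 1 N, (#{d ∈ (f.eval (n : ℤ)).natAbs.divisors | d ≤ N} : ℝ) ≤
      2 * #f.leadingCoeff.natAbs.divisors *
        (N * (∑ m ∈ Icc 1 N, (m : ℝ)⁻¹) ^ 2 ^ f.natDegree) := by
  calc ∑ n ∈ Icc 1 N, (#{d ∈ (f.eval (n : ℤ)).natAbs.divisors | d ≤ N} : ℝ)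
      ≤ ∑ d ∈ Icc 1 N, (#{n ∈ Icc 1 N | (d : ℤ) ∣ f.eval ((n : ℕ) : ℤ)} : ℝ) := by
        exact_mod_cast sum_card_divisors_eval_le_sum_card_roots f N
    _ ≤ 2 * N * (#f.leadingCoeff.natAbs.divisors *
          ∑ m ∈ Icc 1 N, (#m.divisors : ℝ) ^ f.natDegree / m) := sum_card_roots_le hf N
    _ ≤ 2 * N * (#f.leadingCoeff.natAbs.divisors *
          (∑ m ∈ Icc 1 N, (m : ℝ)⁻¹) ^ 2 ^ f.natDegree) := by
        gcongr
        exact sum_card_divisors_pow_div_le N f.natDegree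
    _ = _ := by ring

theorem isBigO_sum_card_divisors_eval {f : ℤ[X]} (hf : f ≠ 0) :
    (fun N : ℕ => ∑ n ∈ Icc 1 N, (#{d ∈ (f.eval (n : ℤ)).natAbs.divisors | d ≤ N} : ℝ))
      =O[atTop] fun N : ℕ => N * Real.log N ^ ((2 ^ f.natDegree : ℕ) : ℝ) := by
  simp only [Real.rpow_natCast]
  refine IsBigO.trans (.of_bound (2 * #f.leadingCoeff.natAbs.divisors) (.of_forall fun N => ?_))
    ((isBigO_refl (fun N : ℕ => (N : ℝ)) atTop).mul (isBigO_sum_inv.pow (2 ^ f.natDegree)))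
  rw [Real.norm_of_nonneg (by positivity), Real.norm_of_nonneg (by positivity)]
  exact sum_card_divisors_eval_le hf N

theorem exists_subset_card_eq_prod_le {ι : Type*} {g : ι → ℕ} {N k j : ℕ}
    {P : Finset ι} (hpos : ∀ i ∈ P, 0 < g i) (hcard : j * k ≤ #P) (hprod : ∏ i ∈ P, g i < N ^ j) :
    ∃ Q ⊆ P, #Q = k ∧ ∏ i ∈ Q, g i ≤ N := by
  classical
  induction j generalizing P with
  | zero => exact absurd hprod (by simpa using (prod_pos hpos).ne')
  | succ j ih =>
    rw [Nat.succ_mul] at hcard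
    obtain ⟨Q, hQP, hQk⟩ := exists_subset_card_eq (show k ≤ #P by omega)
    by_cases hQN : ∏ i ∈ Q, g i ≤ N
    · exact ⟨Q, hQP, hQk, hQN⟩
    have hrest : ∏ i ∈ P \ Q, g i < N ^ j := by
      by_contra! hge
      have := Nat.mul_le_mul hge (not_le.mp hQN).le
      rw [prod_sdiff hQP, ← pow_succ] at this
      omega
    obtain ⟨R, hR, hRk, hRN⟩ := ih (fun i hi => hpos i (sdiff_subset hi))
      (by rw [card_sdiff_of_subset hQP]; omega) hrest
    exact ⟨R, hR.trans sdiff_subset, hRk, hRN⟩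

theorem two_pow_le_card_divisors_le {v N j k : ℕ} (hv : v ≠ 0) (hvN : v < N ^ j)
    (hk : j * k ≤ #v.primeFactors) : 2 ^ k ≤ #{d ∈ v.divisors | d ≤ N} := by
  have prime_of_mem {p : ℕ} (hp : p ∈ v.primeFactors) : p.Prime := Nat.prime_of_mem_primeFactors hp
  obtain ⟨Q, hQ, rfl, hQN⟩ := exists_subset_card_eq_prod_le (g := id)
    (fun p hp => (prime_of_mem hp).pos) hk
    ((Nat.le_of_dvd (Nat.pos_of_ne_zero hv) (Nat.prod_primeFactors_dvd v)).trans_lt hvN)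
  rw [← card_powerset]
  refine card_le_card_of_injOn (fun R => ∏ p ∈ R, p) (fun R hR => ?_) fun R hR R' hR' heq => ?_
  · have hRQ := mem_powerset.mp hR
    have hle : ∏ p ∈ R, p ≤ ∏ p ∈ Q, p :=
      prod_le_prod_of_subset_of_one_le' hRQ fun p hp _ => (prime_of_mem (hQ hp)).one_le
    have hdvd : ∏ p ∈ R, p ∣ v :=
      (prod_dvd_prod_of_subset _ _ _ (hRQ.trans hQ)).trans (Nat.prod_primeFactors_dvd v)
    exact mem_filter.mpr ⟨Nat.mem_divisors.mpr ⟨hdvd, hv⟩, hle.trans hQN⟩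
  · have recover {S : Finset ℕ} (hS : S ∈ Q.powerset) : (∏ p ∈ S, p).primeFactors = S :=
      Nat.primeFactors_prod fun p hp => prime_of_mem (hQ (mem_powerset.mp hS hp))
    rw [← recover hR, ← recover hR']
    exact congrArg Nat.primeFactors heq

theorem natAbs_eval_le (f : ℤ[X]) {x : ℤ} {N : ℕ} (hN : 0 < N) (hx : x.natAbs ≤ N) :
    (f.eval x).natAbs ≤
      (∑ i ∈ range (f.natDegree + 1), (f.coeff i).natAbs) * N ^ f.natDegree := by
  rw [eval_eq_sum_range, sum_mul]
  refine (Int.natAbs_sum_le _ _).trans (sum_le_sum fun i hi => ?_)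
  rw [Int.natAbs_mul, Int.natAbs_pow]
  refine Nat.mul_le_mul_left _ ?_
  calc x.natAbs ^ i ≤ N ^ i := by gcongr
    _ ≤ N ^ f.natDegree := Nat.pow_le_pow_right hN (mem_range_succ_iff.mp hi)

theorem eventually_natAbs_eval_lt_pow (f : ℤ[X]) :
    ∀ᶠ N : ℕ in atTop, ∀ n ∈ Icc 1 N, (f.eval (n : ℤ)).natAbs < N ^ (f.natDegree + 1) := by
  filter_upwards [eventually_gt_atTop (∑ i ∈ range (f.natDegree + 1), (f.coeff i).natAbs)]
    with N hN n hn
  have hNpos : 0 < N := Nat.zero_lt_of_lt hN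
  refine (natAbs_eval_le f hNpos (by simpa using (mem_Icc.mp hn).2)).trans_lt ?_
  rw [pow_succ']
  gcongr

theorem exists_rpow_le_two_pow_le_mul_log (s : ℝ) :
    ∃ C > 0, ∀ᶠ x : ℝ in atTop, ∃ k : ℕ, x ^ s ≤ 2 ^ k ∧ k ≤ C * Real.log x := by
  refine ⟨|s| / Real.log 2 + 1, by positivity, ?_⟩
  filter_upwards [eventually_gt_atTop 0, Real.tendsto_log_atTop.eventually_ge_atTop 1]
    with x hx hlog
  refine ⟨⌈|s| / Real.log 2 * Real.log x⌉₊, ?_, ?_⟩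
  · rw [← Real.rpow_natCast, Real.rpow_def_of_pos hx, Real.rpow_def_of_pos two_pos]
    refine Real.exp_le_exp.mpr ?_
    calc Real.log x * s ≤ Real.log x * |s| := by gcongr; exact le_abs_self s
      _ = Real.log 2 * (|s| / Real.log 2 * Real.log x) := by field_simp
      _ ≤ _ := by gcongr; exact Nat.le_ceil _
  · have := Nat.ceil_lt_add_one (show 0 ≤ |s| / Real.log 2 * Real.log x by positivity)
    linarith

theorem exists_eventually_log_rpow_le_card_divisors (f : ℤ[X]) (s : ℝ) :
    ∃ C > 0, ∀ᶠ N : ℕ in atTop, ∀ n ∈ Icc 1 N,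
      C * Real.log (Real.log N) ≤ #(f.eval (n : ℤ)).natAbs.primeFactors →
        Real.log N ^ s ≤ #{d ∈ (f.eval (n : ℤ)).natAbs.divisors | d ≤ N} := by
  obtain ⟨C, hC, hk⟩ := exists_rpow_le_two_pow_le_mul_log s
  refine ⟨(f.natDegree + 1) * C, by positivity, ?_⟩
  filter_upwards [tendsto_log_natCast_atTop.eventually hk, eventually_natAbs_eval_lt_pow f,
    (Real.tendsto_log_atTop.comp tendsto_log_natCast_atTop).eventually_gt_atTop 0]
    with N ⟨k, hpow, hkC⟩ hsize hloglog n hn homega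
  have hv : (f.eval (n : ℤ)).natAbs ≠ 0 := by
    intro h
    rw [h, Nat.primeFactors_zero, card_empty, Nat.cast_zero] at homega
    exact homega.not_gt (mul_pos (by positivity) hloglog)
  have hcard : (f.natDegree + 1) * k ≤ #(f.eval (n : ℤ)).natAbs.primeFactors := by
    rify
    calc ((f.natDegree : ℝ) + 1) * k ≤ (f.natDegree + 1) * (C * Real.log (Real.log N)) := by gcongr
      _ ≤ _ := by rwa [← mul_assoc]
  exact hpow.trans (by exact_mod_cast two_pow_le_card_divisors_le hv (hsize n hn) hcard)

theorem isBigO_card_filter_of_isBigO_sum {p : ℕ → ℕ → Prop} [∀ N, DecidablePred (p N)]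
    {w : ℕ → ℕ → ℝ} (w_nonneg : ∀ N n, 0 ≤ w N n) {A B : ℝ}
    (hsum : (fun N => ∑ n ∈ Icc 1 N, w N n) =O[atTop] fun N => N * Real.log N ^ B)
    (hlarge : ∀ᶠ N : ℕ in atTop, ∀ n ∈ Icc 1 N, p N n → Real.log N ^ (A + B) ≤ w N n) :
    (fun N => (#{n ∈ Icc 1 N | p N n} : ℝ)) =O[atTop] fun N => N * Real.log N ^ (-A) := by
  have hlog : ∀ᶠ N : ℕ in atTop, 0 < Real.log N := tendsto_log_natCast_atTop.eventually_gt_atTop 0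
  have hmarkov : (fun N => (#{n ∈ Icc 1 N | p N n} : ℝ)) =O[atTop]
      fun N => (∑ n ∈ Icc 1 N, w N n) * Real.log N ^ (-(A + B)) := by
    refine .of_norm_eventuallyLE ?_
    filter_upwards [hlarge, hlog] with N hN hL
    rw [Real.norm_of_nonneg (by positivity), Real.rpow_neg hL.le, ← div_eq_mul_inv,
      le_div_iff₀ (by positivity), ← nsmul_eq_mul]
    refine (card_nsmul_le_sum _ _ _ fun n hn => ?_).trans
      (sum_le_sum_of_subset_of_nonneg (filter_subset _ _) fun n _ _ => w_nonneg N n)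
    exact hN n (mem_filter.mp hn).1 (mem_filter.mp hn).2
  refine (hmarkov.trans (hsum.mul (isBigO_refl _ _))).congr' .rfl ?_
  filter_upwards [hlog] with N hL
  rw [mul_assoc, ← Real.rpow_add hL]
  ring_nf

theorem exists_isBigO_card_many_primeFactors {f : ℤ[X]} (hf : f ≠ 0) (A : ℝ) :
    ∃ C > 0, (fun N : ℕ => (#{n ∈ Icc 1 N | C * Real.log (Real.log N) ≤
        #(f.eval ((n : ℕ) : ℤ)).natAbs.primeFactors} : ℝ))
      =O[atTop] fun N : ℕ => N * Real.log N ^ (-A) := by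
  obtain ⟨C, hC, hmany⟩ :=
    exists_eventually_log_rpow_le_card_divisors f (A + (2 ^ f.natDegree : ℕ))
  exact ⟨C, hC, isBigO_card_filter_of_isBigO_sum (fun N n => Nat.cast_nonneg _)
    (isBigO_sum_card_divisors_eval hf) hmany⟩

theorem exists_forall_le_mul_log_rpow_of_isBigO {F : ℕ → ℝ} {B : ℝ}
    (hF : F =O[atTop] fun N : ℕ => N * Real.log N ^ B) :
    ∃ K : ℝ, 0 < K ∧ ∀ N : ℕ, 3 ≤ N → F N ≤ K * N * Real.log N ^ B := by
  obtain ⟨K, hK, hbound⟩ := bound_of_isBigO_nat_atTop hF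
  refine ⟨K, hK, fun N hN => ?_⟩
  have hlog : 0 < Real.log N := Real.log_pos (by norm_cast; omega)
  have hpos : 0 < N * Real.log N ^ B :=
    mul_pos (by norm_cast; omega) (Real.rpow_pos_of_pos hlog B)
  rw [mul_assoc, ← Real.norm_of_nonneg hpos.le]
  exact (Real.le_norm_self _).trans (hbound hpos.ne')

open Classical in
theorem bind_pure_natCast (s : Finset ℕ) :
    (s >>= fun n => pure (n : ℤ)) = s.map Nat.castEmbedding := by
  rw [bind_pure_comp, fmap_def]
  ext
  simp

end

open Classical Polynomial in
/-- Divisor-sum bound `∑_{n ≤ N} #{d ≤ N : d ∣ f(n)} ≪ N (log N)^B`, and consequently for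
every `A > 0` all but `O_A(N (log N)^{-A})` integers `n ≤ N` satisfy
`ω(f(n)) < C log log N` for a suitable `C = C(A, f)`. -/
theorem stmt_2 (f : Polynomial ℤ) (hf : 1 ≤ f.natDegree) :
    (∃ B K : ℝ, 0 < K ∧ ∀ N : ℕ, 3 ≤ N →
      (∑ n ∈ Finset.Icc 1 N,
          ((((f.eval (n : ℤ)).natAbs.divisors.filter (fun d => d ≤ N)).card : ℝ)))
        ≤ K * N * (Real.log N) ^ B) ∧
    (∀ A : ℝ, 0 < A → ∃ C K : ℝ, 0 < C ∧ 0 < K ∧ ∀ N : ℕ, 3 ≤ N →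
      ((((Finset.Icc 1 N).filter (fun n =>
          C * Real.log (Real.log N) ≤ ((f.eval (n : ℤ)).natAbs.primeFactors.card : ℝ))).card : ℝ))
        ≤ K * N * (Real.log N) ^ (-A)) := by
  have hf₀ : f ≠ 0 := ne_zero_of_natDegree_gt hf
  constructor
  · obtain ⟨K, hK, hsum⟩ :=
      exists_forall_le_mul_log_rpow_of_isBigO (isBigO_sum_card_divisors_eval hf₀)
    exact ⟨_, K, hK, hsum⟩
  · intro A _
    obtain ⟨C, hC, hcount⟩ := exists_isBigO_card_many_primeFactors hf₀ A
    obtain ⟨K, hK, hcard⟩ := exists_forall_le_mul_log_rpow_of_isBigO hcount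
    refine ⟨C, K, hC, hK, fun N hN => ?_⟩
    -- `n` ranges over the image of `[1, N]` in `ℤ` here, which is elaborated as a monadic bind.
    rw [bind_pure_natCast, Finset.filter_map, Finset.card_map]
    exact hcard N hN
end

section
/- For any N ≥ 2 and any ε > 0, Σ_{r ≤ N^{1/2−ε}} Σ_{χ mod r primitive} |Σ_{q ≤ N, q prime} χ(q)|² ≪_ε N²/(log N)², where χ ranges over primitive Dirichlet characters modulo r. -/
/-!
Fix `z = N^ε` and `Q = N^(1/2-ε)`, so that `(zQ)² ≤ N`, and work on `ℤ/M` for a large, highly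
divisible `M ≍ K (N + (zQ)²)`. On `ℤ/M` put the weight `h = D_K w`, where `D_K` is the Dirichlet
kernel of length `K` and `w(x) = ∑_{l ≤ z} μ(l) c_l(x) / l` is built from Ramanujan sums.

The functions `w χ` with `χ` of conductor at most `Q` are combinations of functions of period at
most `zQ`. On the products of two such functions `|D_K|²` acts through its mean value `K`, because
the other frequencies of `|D_K|²` are too small to be multiples of `M` divided by the period.
Since `w` is invariant under multiplication by units, distinct primitive characters are orthogonal
for the weight `|w|²`, and hence the functions `h χ` are orthogonal, with norms
`∑ |h χ|² ≤ K M L(z)`, where `L(z)` is the sum of `1 / l` over the squarefree `l ≤ z`.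

On the integers `n ≤ N` without a prime factor `≤ z` one has `w(n) = L(z)` and `|D_K(n)| ≥ K / 2`,
so dividing the coefficients by `h` in Bessel's inequality costs `(K L(z) / 2)⁻²`. The net bound is
`≪ N / L(z)` times the `ℓ²` norm of the coefficients, and `L(z) ≫ log z ≫ ε log N` saves one
logarithm while Chebyshev's bound for the number of primes saves another. The primes `≤ z`
contribute at most `z²` for each of the at most `Q²` characters.
-/

namespace LargeSieve

open Finset ComplexConjugate ArithmeticFunction
open scoped Moebius

section Bessel

variable {𝕜 E ι : Type*} [RCLike 𝕜] [SeminormedAddCommGroup E] [InnerProductSpace 𝕜 E]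

lemma norm_sum_smul_sq_of_pairwise_inner_eq_zero {s : Finset ι} {v : ι → E}
    (hv : (s : Set ι).Pairwise fun i j ↦ inner 𝕜 (v i) (v j) = 0) (c : ι → 𝕜) :
    ‖∑ i ∈ s, c i • v i‖ ^ 2 = ∑ i ∈ s, ‖c i‖ ^ 2 * ‖v i‖ ^ 2 := by
  classical
  induction s using Finset.induction_on with
  | empty => simp
  | insert i s hi ih =>
    have hv_s : (s : Set ι).Pairwise fun i j ↦ inner 𝕜 (v i) (v j) = 0 := hv.mono (by simp)
    have horth : inner 𝕜 (c i • v i) (∑ j ∈ s, c j • v j) = 0 := by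
      rw [inner_sum]
      refine sum_eq_zero fun j hj ↦ ?_
      rw [inner_smul_left, inner_smul_right, hv (by simp) (by simp [hj]) (by grind)]
      simp
    rw [sum_insert hi, sum_insert hi, ← ih hv_s, sq,
      norm_add_sq_eq_norm_sq_add_norm_sq_of_inner_eq_zero _ _ horth, norm_smul]
    ring

theorem sum_norm_inner_sq_le_of_pairwise_inner_eq_zero {s : Finset ι} {v : ι → E} {B : ℝ}
    (hB : 0 ≤ B) (hv : (s : Set ι).Pairwise fun i j ↦ inner 𝕜 (v i) (v j) = 0)
    (hvB : ∀ i ∈ s, ‖v i‖ ^ 2 ≤ B) (f : E) :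
    ∑ i ∈ s, ‖inner 𝕜 (v i) f‖ ^ 2 ≤ B * ‖f‖ ^ 2 := by
  set T : ℝ := ∑ i ∈ s, ‖inner 𝕜 (v i) f‖ ^ 2 with hT
  set u : E := ∑ i ∈ s, inner 𝕜 (v i) f • v i
  have hT0 : 0 ≤ T := by positivity
  have inner_u : inner 𝕜 u f = (T : 𝕜) := by
    simp only [u, hT, sum_inner, inner_smul_left, RCLike.conj_mul]
    push_cast
    rfl
  have norm_u : ‖u‖ ^ 2 ≤ B * T := by
    rw [norm_sum_smul_sq_of_pairwise_inner_eq_zero hv, mul_comm B, sum_mul]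
    gcongr with i hi
    exact hvB i hi
  have hTu : T ≤ ‖u‖ * ‖f‖ := by
    simpa [inner_u, abs_of_nonneg hT0] using norm_inner_le_norm (𝕜 := 𝕜) u f
  rcases hT0.eq_or_lt with h | h
  · rw [← h]; positivity
  · refine le_of_mul_le_mul_left ?_ h
    calc T * T ≤ (‖u‖ * ‖f‖) * (‖u‖ * ‖f‖) := by gcongr
      _ = ‖u‖ ^ 2 * ‖f‖ ^ 2 := by ring
      _ ≤ (B * T) * ‖f‖ ^ 2 := by gcongr
      _ = T * (B * ‖f‖ ^ 2) := by ring

end Bessel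

theorem sum_norm_sum_mul_sq_le_of_orthogonal {X ι : Type*} [Fintype X] {s : Finset ι}
    {h : X → ℂ} {v : ι → X → ℂ} {B c : ℝ} (hB : 0 ≤ B) (hc : 0 < c)
    (horth : (s : Set ι).Pairwise fun i j ↦ ∑ x, h x * v i x * conj (h x * v j x) = 0)
    (hdiag : ∀ i ∈ s, ∑ x, ‖h x * v i x‖ ^ 2 ≤ B) {P : Finset X} (hP : ∀ x ∈ P, c ≤ ‖h x‖)
    (a : X → ℂ) :
    ∑ i ∈ s, ‖∑ x ∈ P, a x * v i x‖ ^ 2 ≤ B / c ^ 2 * ∑ x ∈ P, ‖a x‖ ^ 2 := by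
  classical
  let V (i : ι) : EuclideanSpace ℂ X := WithLp.toLp 2 fun x ↦ conj (h x * v i x)
  let f : EuclideanSpace ℂ X := WithLp.toLp 2 fun x ↦ if x ∈ P then a x / h x else 0
  have h_ne {x} (hx : x ∈ P) : h x ≠ 0 := norm_pos_iff.mp (hc.trans_le (hP x hx))
  have inner_V_f (i : ι) : inner ℂ (V i) f = ∑ x ∈ P, a x * v i x := by
    simp only [V, f, PiLp.inner_apply, RCLike.inner_apply, Complex.conj_conj, ite_mul, zero_mul,
      sum_ite_mem, univ_inter]
    exact sum_congr rfl fun x hx ↦ by field [h_ne hx]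
  have norm_f : ‖f‖ ^ 2 ≤ (∑ x ∈ P, ‖a x‖ ^ 2) / c ^ 2 := by
    calc ‖f‖ ^ 2 = ∑ x ∈ P, ‖a x‖ ^ 2 / ‖h x‖ ^ 2 := by
          simp [EuclideanSpace.norm_sq_eq, f, apply_ite, ite_pow, div_pow]
      _ ≤ ∑ x ∈ P, ‖a x‖ ^ 2 / c ^ 2 := by gcongr with x hx; exact hP x hx
      _ = _ := (sum_div ..).symm
  have bessel := sum_norm_inner_sq_le_of_pairwise_inner_eq_zero (𝕜 := ℂ) hB (v := V) (s := s)
    (fun i hi j hj hij ↦ by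
      simpa [V, PiLp.inner_apply, mul_comm] using horth hi hj hij)
    (fun i hi ↦ by simpa [V, EuclideanSpace.norm_sq_eq] using hdiag i hi) f
  simp only [inner_V_f] at bessel
  calc _ ≤ B * ‖f‖ ^ 2 := bessel
    _ ≤ B * ((∑ x ∈ P, ‖a x‖ ^ 2) / c ^ 2) := by gcongr
    _ = _ := by ring

lemma sum_eq_zero_of_comp_equiv_eq_mul {X R : Type*} [Fintype X] [CommRing R] [IsDomain R]
    {f : X → R} {η : R} (e : X ≃ X) (hη : η ≠ 1) (hf : ∀ x, f (e x) = η * f x) :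
    ∑ x, f x = 0 := by
  have hinv : η * ∑ x, f x = ∑ x, f x := by
    simp only [mul_sum, ← hf, Equiv.sum_comp e f]
  exact (mul_left_eq_self₀.mp hinv).resolve_left hη

section DirichletKernel

variable {M : ℕ}

/-- The span of the functions on `ℤ/M` that have a period in `{1, …, B}`. -/
def boundedPeriod (M B : ℕ) : Submodule ℂ (ZMod M → ℂ) :=
  Submodule.span ℂ {f | ∃ m : ℕ, 0 < m ∧ m ≤ B ∧ Function.Periodic f (m : ZMod M)}

variable [NeZero M]

/-- The Dirichlet kernel `∑_{k < K} e(k x / M)` on `ℤ/M`. -/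
noncomputable def dirichletKernel (K : ℕ) (x : ZMod M) : ℂ :=
  ∑ k ∈ range K, ZMod.stdAddChar ((k : ZMod M) * x)

lemma sum_stdAddChar_mul_eq_zero_of_periodic {g : ZMod M → ℂ} {m : ℕ} {j : ℤ}
    (hg : Function.Periodic g (m : ZMod M)) (hj : j * m ≠ 0) (hjm : |j * m| < M) :
    ∑ x, ZMod.stdAddChar ((j : ZMod M) * x) * g x = 0 := by
  have shift_ne : (ZMod.stdAddChar ((j : ZMod M) * (m : ZMod M)) : ℂ) ≠ 1 := by
    rw [← AddChar.map_zero_eq_one (ZMod.stdAddChar (N := M)), ZMod.injective_stdAddChar.ne_iff]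
    intro h
    have hdvd : (M : ℤ) ∣ j * m := by
      rw [← ZMod.intCast_zmod_eq_zero_iff_dvd]; exact_mod_cast h
    exact hj (Int.eq_zero_of_abs_lt_dvd hdvd hjm)
  refine sum_eq_zero_of_comp_equiv_eq_mul (Equiv.addRight (m : ZMod M)) shift_ne fun x ↦ ?_
  rw [Equiv.coe_addRight, hg x, mul_add, AddChar.map_add_eq_mul]
  ring

lemma dirichletKernel_mul_conj (K : ℕ) (x : ZMod M) :
    dirichletKernel K x * conj (dirichletKernel K x) =
      ∑ k ∈ range K, ∑ k' ∈ range K,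
        ZMod.stdAddChar (((k - k' : ℤ) : ZMod M) * x) := by
  simp only [dirichletKernel, map_sum, sum_mul_sum, ← AddChar.map_neg_eq_conj,
    ← AddChar.map_add_eq_mul]
  refine sum_congr rfl fun k _ ↦ sum_congr rfl fun k' _ ↦ ?_
  push_cast
  ring_nf

lemma sum_dirichletKernel_mul_conj_mul_of_periodic {g : ZMod M → ℂ} {m K : ℕ} (hm : 0 < m)
    (hK : K * m ≤ M) (hg : Function.Periodic g (m : ZMod M)) :
    ∑ x, dirichletKernel K x * conj (dirichletKernel K x) * g x = K * ∑ x, g x := by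
  have offDiagonal {k k' : ℕ} (hk : k ∈ range K) (hk' : k' ∈ range K) (hne : k' ≠ k) :
      ∑ x, ZMod.stdAddChar (((k - k' : ℤ) : ZMod M) * x) * g x = 0 := by
    rw [mem_range] at hk hk'
    refine sum_stdAddChar_mul_eq_zero_of_periodic hg
      (mul_ne_zero (by omega) (by exact_mod_cast hm.ne')) ?_
    rw [abs_mul, Nat.abs_cast]
    calc |(k - k' : ℤ)| * m < K * m := by gcongr; rw [abs_lt]; omega
      _ ≤ M := by exact_mod_cast hK
  simp only [dirichletKernel_mul_conj, sum_mul]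
  rw [sum_comm]
  calc ∑ k ∈ range K, ∑ x, ∑ k' ∈ range K, ZMod.stdAddChar (((k - k' : ℤ) : ZMod M) * x) * g x
      = ∑ k ∈ range K, ∑ x, g x := by
        refine sum_congr rfl fun k hk ↦ ?_
        rw [sum_comm, sum_eq_single_of_mem k hk fun k' hk' hne ↦ offDiagonal hk hk' hne]
        simp
    _ = K * ∑ x, g x := by simp

theorem sum_dirichletKernel_mul_conj_of_mem_boundedPeriod {f g : ZMod M → ℂ} {B K : ℕ}
    (hK : K * B ^ 2 ≤ M) (hf : f ∈ boundedPeriod M B) (hg : g ∈ boundedPeriod M B) :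
    ∑ x, dirichletKernel K x * f x * conj (dirichletKernel K x * g x) =
      K * ∑ x, f x * conj (g x) := by
  have separate (f g : ZMod M → ℂ) (x : ZMod M) :
      dirichletKernel K x * f x * conj (dirichletKernel K x * g x) =
        dirichletKernel K x * conj (dirichletKernel K x) * (f x * conj (g x)) := by
    rw [map_mul]; ring
  simp only [separate]
  induction hf, hg using Submodule.span_induction₂ with
  | mem_mem f g hf hg =>
    obtain ⟨m, hm, hmB, hf⟩ := hf
    obtain ⟨m', hm', hmB', hg⟩ := hg
    refine sum_dirichletKernel_mul_conj_mul_of_periodic (g := fun x ↦ f x * conj (g x))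
      (Nat.mul_pos hm hm') (le_trans (by gcongr; nlinarith) hK) fun x ↦ ?_
    simp only [Nat.cast_mul, (hg.nat_mul m) x]
    rw [mul_comm (m : ZMod M), (hf.nat_mul m') x]
  | zero_left => simp
  | zero_right => simp
  | add_left f f' g _ _ _ h h' => simp only [Pi.add_apply, add_mul, mul_add, sum_add_distrib, h, h']
  | add_right f g g' _ _ _ h h' =>
    simp only [Pi.add_apply, map_add, mul_add, sum_add_distrib, h, h']
  | smul_left r f g _ _ h =>
    simp only [Pi.smul_apply, smul_eq_mul, mul_assoc, mul_left_comm _ r, ← mul_sum] at h ⊢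
    rw [h]
  | smul_right r f g _ _ h =>
    simp only [Pi.smul_apply, smul_eq_mul, map_mul, mul_left_comm _ (conj r), ← mul_sum, h]

lemma half_le_norm_dirichletKernel_natCast {K n : ℕ} (h : 6 * (K * n) ≤ M) :
    (K : ℝ) / 2 ≤ ‖dirichletKernel K (n : ZMod M)‖ := by
  have hM : (0 : ℝ) < M := by exact_mod_cast NeZero.pos M
  have half_le_re {k : ℕ} (hk : k ∈ range K) :
      1 / 2 ≤ (ZMod.stdAddChar ((k : ZMod M) * (n : ZMod M)) : ℂ).re := by
    have hkn : 6 * ((k : ℝ) * n) ≤ M := by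
      have : 6 * (k * n) ≤ M := le_trans (by gcongr; exact (mem_range.mp hk).le) h
      exact_mod_cast this
    have angle_le : 2 * Real.pi * (k * n) / M ≤ Real.pi / 3 := by
      rw [div_le_div_iff₀ hM three_pos]
      nlinarith [Real.pi_pos]
    have hexp : (ZMod.stdAddChar ((k : ZMod M) * (n : ZMod M)) : ℂ) =
        Complex.exp ((2 * Real.pi * (k * n) / M : ℝ) * Complex.I) := by
      rw [show (k : ZMod M) * (n : ZMod M) = ((k * n : ℤ) : ZMod M) by push_cast; ring,
        ZMod.stdAddChar_coe]
      push_cast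
      ring_nf
    rw [hexp, Complex.exp_ofReal_mul_I_re, ← Real.cos_pi_div_three]
    exact Real.cos_le_cos_of_nonneg_of_le_pi (by positivity) (by linarith [Real.pi_pos]) angle_le
  calc (K : ℝ) / 2 = ∑ k ∈ range K, (1 / 2 : ℝ) := by
        rw [sum_const, card_range, nsmul_eq_mul, mul_one_div]
    _ ≤ (dirichletKernel K (n : ZMod M)).re := by
      rw [dirichletKernel, Complex.re_sum]
      exact sum_le_sum fun k hk ↦ half_le_re hk
    _ ≤ _ := Complex.re_le_norm _

end DirichletKernel

section RamanujanSum

/-- The Ramanujan sum `c_l(n)`, the sum of the `n`-th powers of the primitive `l`-th roots of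
unity. -/
noncomputable def ramanujanSum (l n : ℕ) : ℂ := ∑ ζ ∈ primitiveRoots l ℂ, ζ ^ n

lemma ramanujanSum_congr {l m n : ℕ} (h : m ≡ n [MOD l]) : ramanujanSum l m = ramanujanSum l n := by
  refine sum_congr rfl fun ζ hζ ↦ ?_
  have hl := (isPrimitiveRoot_of_mem_primitiveRoots hζ).eq_orderOf
  rw [← pow_mod_orderOf, ← hl, h, hl, pow_mod_orderOf]

lemma ramanujanSum_coprime_mul {l a : ℕ} (ha : a.Coprime l) (n : ℕ) :
    ramanujanSum l (a * n) = ramanujanSum l n := by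
  rcases l.eq_zero_or_pos with rfl | hl
  · simp [ramanujanSum]
  have pow_mem {ζ : ℂ} (hζ : ζ ∈ primitiveRoots l ℂ) : ζ ^ a ∈ primitiveRoots l ℂ :=
    (mem_primitiveRoots hl).mpr ((isPrimitiveRoot_of_mem_primitiveRoots hζ).pow_of_coprime a ha)
  have pow_injOn : Set.InjOn (fun ζ : ℂ ↦ ζ ^ a) (primitiveRoots l ℂ) := by
    intro ζ hζ ξ hξ (h : ζ ^ a = ξ ^ a)
    have hζ' := isPrimitiveRoot_of_mem_primitiveRoots hζ
    have hξ' := isPrimitiveRoot_of_mem_primitiveRoots hξ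
    have hξ0 : ξ ≠ 0 := hξ'.ne_zero hl.ne'
    have quotient_pow_gcd : (ζ / ξ) ^ a.gcd l = 1 := pow_gcd_eq_one.mpr
      ⟨by rw [div_pow, h, div_self (pow_ne_zero a hξ0)],
        by rw [div_pow, hζ'.pow_eq_one, hξ'.pow_eq_one, div_one]⟩
    rwa [ha.gcd_eq_one, pow_one, div_eq_one_iff_eq hξ0] at quotient_pow_gcd
  refine sum_nbij (fun ζ ↦ ζ ^ a) (fun ζ ↦ pow_mem) pow_injOn ?_ fun ζ _ ↦ pow_mul ζ a n
  exact surjOn_of_injOn_of_card_le _ (fun ζ ↦ pow_mem) pow_injOn le_rfl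

lemma sum_divisors_ramanujanSum_one {n : ℕ} (hn : 0 < n) :
    ∑ d ∈ n.divisors, ramanujanSum d 1 = if n = 1 then 1 else 0 := by
  simp only [ramanujanSum, pow_one]
  rw [← sum_biUnion fun d _ d' _ h ↦ IsPrimitiveRoot.disjoint h,
    ← IsPrimitiveRoot.nthRoots_one_eq_biUnion_primitiveRoots]
  have hζ := Complex.isPrimitiveRoot_exp n hn.ne'
  set ζ := Complex.exp (2 * Real.pi * Complex.I / n)
  have roots_eq : Polynomial.nthRootsFinset n (1 : ℂ) = (range n).image (ζ ^ ·) := by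
    refine (eq_of_subset_of_card_le (image_subset_iff.mpr fun i _ ↦ ?_) ?_).symm
    · rw [Polynomial.mem_nthRootsFinset hn, ← pow_mul, mul_comm, pow_mul, hζ.pow_eq_one, one_pow]
    · rw [hζ.card_nthRootsFinset, card_image_of_injOn (by simpa using hζ.injOn_pow), card_range]
  rw [roots_eq, sum_image (by simpa using hζ.injOn_pow)]
  split_ifs with h
  · simp [h]
  · exact hζ.geom_sum_eq_zero (by omega)

theorem ramanujanSum_one {l : ℕ} (hl : 0 < l) : ramanujanSum l 1 = μ l := by
  rw [← sum_eq_iff_sum_mul_moebius_eq.mp (fun n hn ↦ sum_divisors_ramanujanSum_one hn) l hl,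
    sum_eq_single_of_mem (l, 1) (by simp [hl.ne'])]
  · simp
  · rintro ⟨d, e⟩ hde hne
    have he : e ≠ 1 := by
      rintro rfl
      simp_all
    simp [he]

lemma ramanujanSum_of_coprime {l n : ℕ} (hl : 0 < l) (hn : n.Coprime l) :
    ramanujanSum l n = μ l := by
  rw [← mul_one n, ramanujanSum_coprime_mul hn, ramanujanSum_one hl]

lemma sum_pow_val_mul_conj_pow_val {M : ℕ} [NeZero M] {ζ ξ : ℂ} (hζ : ζ ^ M = 1) (hξ : ξ ^ M = 1) :
    ∑ x : ZMod M, ζ ^ x.val * conj (ξ ^ x.val) = if ζ = ξ then (M : ℂ) else 0 := by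
  have conj_ξ : conj ξ = ξ⁻¹ :=
    (Complex.inv_eq_conj (Complex.norm_eq_one_of_pow_eq_one hξ (NeZero.ne M))).symm
  have hξ0 : ξ ≠ 0 := by rintro rfl; simp [NeZero.ne M] at hξ
  have hη : (ζ / ξ) ^ M = 1 := by rw [div_pow, hζ, hξ, div_one]
  have term_eq (x : ZMod M) : ζ ^ x.val * conj (ξ ^ x.val) = AddChar.zmodChar M hη x := by
    rw [AddChar.zmodChar_apply, map_pow, conj_ξ, ← mul_pow, div_eq_mul_inv]
  simp only [term_eq]
  split_ifs with h
  · simp [AddChar.zmodChar_apply, h, hξ0]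
  · refine AddChar.sum_eq_zero_of_ne_one fun htriv ↦ h ?_
    have h1 := AddChar.zmodChar_apply' hη 1
    rwa [htriv, AddChar.one_apply, pow_one, eq_comm, div_eq_one_iff_eq hξ0] at h1

theorem sum_ramanujanSum_mul_conj {M l l' : ℕ} [NeZero M] (hl : l ∣ M) (hl' : l' ∣ M) :
    ∑ x : ZMod M, ramanujanSum l x.val * conj (ramanujanSum l' x.val) =
      if l = l' then (M : ℂ) * l.totient else 0 := by
  have pow_M {d : ℕ} (hd : d ∣ M) {ζ : ℂ} (hζ : ζ ∈ primitiveRoots d ℂ) : ζ ^ M = 1 :=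
    ((isPrimitiveRoot_of_mem_primitiveRoots hζ).pow_eq_one_iff_dvd M).mpr hd
  calc ∑ x : ZMod M, ramanujanSum l x.val * conj (ramanujanSum l' x.val)
      = ∑ ζ ∈ primitiveRoots l ℂ, ∑ ξ ∈ primitiveRoots l' ℂ,
          ∑ x : ZMod M, ζ ^ x.val * conj (ξ ^ x.val) := by
        simp only [ramanujanSum, map_sum, sum_mul_sum]
        rw [sum_comm]
        exact sum_congr rfl fun ζ _ ↦ sum_comm
    _ = ∑ ζ ∈ primitiveRoots l ℂ, ∑ ξ ∈ primitiveRoots l' ℂ, if ζ = ξ then (M : ℂ) else 0 :=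
        sum_congr rfl fun ζ hζ ↦ sum_congr rfl fun ξ hξ ↦
          sum_pow_val_mul_conj_pow_val (pow_M hl hζ) (pow_M hl' hξ)
    _ = #(primitiveRoots l ℂ ∩ primitiveRoots l' ℂ) * M := by simp [sum_ite_mem]
    _ = _ := by
        split_ifs with h
        · rw [← h, inter_self, Complex.card_primitiveRoots, mul_comm]
        · rw [disjoint_iff_inter_eq_empty.mp (IsPrimitiveRoot.disjoint h)]; simp

end RamanujanSum

section SquarefreeHarmonic

/-- The sum `L(z)` of `1 / l` over the squarefree `l ≤ z`. -/
noncomputable def squarefreeHarmonic (z : ℕ) : ℝ := ∑ l ∈ Icc 1 z with Squarefree l, (l : ℝ)⁻¹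

lemma squarefreeHarmonic_pos {z : ℕ} (hz : 0 < z) : 0 < squarefreeHarmonic z := by
  refine sum_pos (fun l hl ↦ ?_) ⟨1, by simpa using Nat.one_le_iff_ne_zero.mpr hz.ne'⟩
  have : 0 < l := (mem_Icc.mp (mem_filter.mp hl).1).1
  positivity

lemma harmonic_le_squarefreeHarmonic_mul (z : ℕ) :
    (harmonic z : ℝ) ≤ squarefreeHarmonic z * ∑ b ∈ Icc 1 z, ((b : ℝ) ^ 2)⁻¹ := by
  choose a b b_sq_mul_a a_squarefree using Nat.sq_mul_squarefree
  let g (p : ℕ × ℕ) : ℝ := (p.1 : ℝ)⁻¹ * ((p.2 : ℝ) ^ 2)⁻¹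
  have decomposition_injOn : Set.InjOn (fun n ↦ (a n, b n)) (Icc 1 z : Finset ℕ) := by
    intro n _ m _ h
    simp only [Prod.mk.injEq] at h
    rw [← b_sq_mul_a n, ← b_sq_mul_a m, h.1, h.2]
  have decomposition_mem : (Icc 1 z).image (fun n ↦ (a n, b n)) ⊆
      {l ∈ Icc 1 z | Squarefree l} ×ˢ Icc 1 z := by
    rw [image_subset_iff]
    intro n hn
    obtain ⟨hn1, hnz⟩ := mem_Icc.mp hn
    have hn0 : 0 < b n ^ 2 * a n := by rw [b_sq_mul_a]; omega
    have ha : a n ≤ n := Nat.le_of_dvd hn1 (Dvd.intro_left _ (b_sq_mul_a n))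
    have hb : b n ≤ n := Nat.le_of_dvd hn1 ⟨b n * a n, by nlinarith [b_sq_mul_a n]⟩
    simp only [mem_product, mem_filter, mem_Icc]
    exact ⟨⟨⟨Nat.pos_of_mul_pos_left hn0, ha.trans hnz⟩, a_squarefree n⟩,
      Nat.pos_of_ne_zero (by rintro h; simp [h] at hn0), hb.trans hnz⟩
  calc (harmonic z : ℝ) = ∑ n ∈ Icc 1 z, g (a n, b n) := by
        rw [harmonic_eq_sum_Icc]
        push_cast
        refine sum_congr rfl fun n _ ↦ ?_
        nth_rw 1 [← b_sq_mul_a n]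
        push_cast
        rw [mul_inv_rev]
    _ = ∑ p ∈ (Icc 1 z).image fun n ↦ (a n, b n), g p := (sum_image decomposition_injOn).symm
    _ ≤ ∑ p ∈ {l ∈ Icc 1 z | Squarefree l} ×ˢ Icc 1 z, g p :=
        sum_le_sum_of_subset_of_nonneg decomposition_mem fun p _ _ ↦ by positivity
    _ = _ := by rw [sum_product, squarefreeHarmonic, sum_mul_sum]

theorem log_add_one_le_two_mul_squarefreeHarmonic (z : ℕ) :
    Real.log (z + 1 : ℕ) ≤ 2 * squarefreeHarmonic z := by
  have sum_inv_sq_le : ∑ b ∈ Icc 1 z, ((b : ℝ) ^ 2)⁻¹ ≤ 2 := by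
    rw [show Icc 1 z = Ioo 0 (z + 1) from rfl]
    simpa using sum_Ioo_inv_sq_le (α := ℝ) 0 (z + 1)
  have hL : 0 ≤ squarefreeHarmonic z := sum_nonneg fun l _ ↦ by positivity
  calc Real.log (z + 1 : ℕ) ≤ harmonic z := log_add_one_le_harmonic z
    _ ≤ squarefreeHarmonic z * ∑ b ∈ Icc 1 z, ((b : ℝ) ^ 2)⁻¹ :=
      harmonic_le_squarefreeHarmonic_mul z
    _ ≤ squarefreeHarmonic z * 2 := by gcongr
    _ = _ := mul_comm _ _

end SquarefreeHarmonic

section SieveWeight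

variable {M z : ℕ}

/-- The weight `w(x) = ∑_{l ≤ z} μ(l) c_l(x) / l` on `ℤ/M`. It is meant for moduli `M` divisible by
every `l ≤ z`, for which `c_l(x)` does not depend on the representative of `x`. -/
noncomputable def sieveWeight (M z : ℕ) (x : ZMod M) : ℂ :=
  ∑ l ∈ Icc 1 z, (μ l : ℂ) / l * ramanujanSum l x.val

lemma sieveWeight_natCast_of_coprime (hM : ∀ l ∈ Icc 1 z, l ∣ M) {n : ℕ}
    (hn : ∀ l ∈ Icc 1 z, n.Coprime l) : sieveWeight M z (n : ZMod M) = squarefreeHarmonic z := by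
  have term_eq {l : ℕ} (hl : l ∈ Icc 1 z) :
      (μ l : ℂ) / l * ramanujanSum l (n : ZMod M).val =
        if Squarefree l then (l : ℂ)⁻¹ else 0 := by
    have hmod : (n : ZMod M).val ≡ n [MOD l] := by
      rw [ZMod.val_natCast]
      exact (Nat.mod_modEq n M).of_dvd (hM l hl)
    rw [ramanujanSum_congr hmod, ramanujanSum_of_coprime (mem_Icc.mp hl).1 (hn l hl),
      div_mul_eq_mul_div, ← sq]
    split_ifs with hsq
    · have := moebius_sq_eq_one_of_squarefree hsq
      rw [show (μ l : ℂ) ^ 2 = 1 by exact_mod_cast this, one_div]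
    · simp [moebius_eq_zero_of_not_squarefree hsq]
  rw [sieveWeight, sum_congr rfl fun l hl ↦ term_eq hl, ← sum_filter, squarefreeHarmonic]
  push_cast
  rfl

lemma sieveWeight_units_mul (hM : ∀ l ∈ Icc 1 z, l ∣ M) (u : (ZMod M)ˣ) (x : ZMod M) :
    sieveWeight M z (u * x) = sieveWeight M z x := by
  refine sum_congr rfl fun l hl ↦ ?_
  have hmod : (u * x : ZMod M).val ≡ (u : ZMod M).val * x.val [MOD l] := by
    rw [ZMod.val_mul]
    exact (Nat.mod_modEq _ M).of_dvd (hM l hl)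
  rw [ramanujanSum_congr hmod, ramanujanSum_coprime_mul
    ((ZMod.val_coe_unit_coprime u).coprime_dvd_right (hM l hl))]

variable [NeZero M]

lemma sieveWeight_mul_mem_boundedPeriod (hM : ∀ l ∈ Icc 1 z, l ∣ M) {r B : ℕ} (hr : r ∣ M)
    (hB : z * r ≤ B) (g : ZMod r → ℂ) :
    (fun x : ZMod M ↦ sieveWeight M z x * g x.cast) ∈ boundedPeriod M B := by
  have hr0 : 0 < r := Nat.pos_of_dvd_of_pos hr (NeZero.pos M)
  have expand : (fun x : ZMod M ↦ sieveWeight M z x * g x.cast) =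
      ∑ l ∈ Icc 1 z, ((μ l : ℂ) / l) • fun x : ZMod M ↦ ramanujanSum l x.val * g x.cast := by
    ext x
    simp only [sieveWeight, sum_mul, mul_assoc, Finset.sum_apply, Pi.smul_apply, smul_eq_mul]
  rw [expand]
  refine Submodule.sum_mem _ fun l hl ↦ Submodule.smul_mem _ _ (Submodule.subset_span ?_)
  obtain ⟨hl0, hlz⟩ := mem_Icc.mp hl
  refine ⟨l * r, by positivity, le_trans (by gcongr) hB, fun x ↦ ?_⟩
  have hmod : (x + (l * r : ℕ) : ZMod M).val ≡ x.val [MOD l] := by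
    rw [ZMod.val_add, ZMod.val_natCast, Nat.add_mod_mod]
    refine ((Nat.mod_modEq _ M).of_dvd (hM l hl)).trans ?_
    simp [Nat.ModEq]
  simp only [ramanujanSum_congr hmod, ZMod.cast_add hr, ZMod.cast_natCast hr]
  simp

theorem sum_norm_sieveWeight_sq_le (hM : ∀ l ∈ Icc 1 z, l ∣ M) :
    ∑ x, ‖sieveWeight M z x‖ ^ 2 ≤ M * squarefreeHarmonic z := by
  have expand : ((∑ x, ‖sieveWeight M z x‖ ^ 2 : ℝ) : ℂ) =
      ∑ l ∈ Icc 1 z, ((μ l : ℂ) / l) ^ 2 * (M * l.totient) := by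
    calc ((∑ x, ‖sieveWeight M z x‖ ^ 2 : ℝ) : ℂ)
        = ∑ x, sieveWeight M z x * conj (sieveWeight M z x) := by
          push_cast
          simp only [Complex.mul_conj']
      _ = ∑ l ∈ Icc 1 z, ∑ l' ∈ Icc 1 z, (μ l : ℂ) / l * ((μ l' : ℂ) / l') *
            ∑ x : ZMod M, ramanujanSum l x.val * conj (ramanujanSum l' x.val) := by
          simp only [sieveWeight, map_sum, sum_mul_sum]
          rw [sum_comm]
          refine sum_congr rfl fun l _ ↦ ?_
          rw [sum_comm]
          simp only [map_mul, map_div₀, map_intCast, map_natCast, mul_sum, mul_mul_mul_comm]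
      _ = ∑ l ∈ Icc 1 z, ((μ l : ℂ) / l) ^ 2 * (M * l.totient) := by
          refine sum_congr rfl fun l hl ↦ ?_
          rw [sum_eq_single_of_mem l hl fun l' hl' hne ↦ by
            rw [sum_ramanujanSum_mul_conj (hM l hl) (hM l' hl'), if_neg hne.symm, mul_zero]]
          rw [sum_ramanujanSum_mul_conj (hM l hl) (hM l hl), if_pos rfl, sq]
  have expand_real : ∑ x, ‖sieveWeight M z x‖ ^ 2 =
      ∑ l ∈ Icc 1 z, ((μ l : ℝ) / l) ^ 2 * (M * l.totient) := by
    exact_mod_cast expand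
  rw [expand_real, squarefreeHarmonic, sum_filter, mul_sum]
  refine sum_le_sum fun l hl ↦ ?_
  have hl0 : (0 : ℝ) < l := by exact_mod_cast (mem_Icc.mp hl).1
  split_ifs with hsq
  · have hμ : (μ l : ℝ) ^ 2 = 1 := by exact_mod_cast moebius_sq_eq_one_of_squarefree hsq
    calc ((μ l : ℝ) / l) ^ 2 * (M * l.totient) ≤ ((μ l : ℝ) / l) ^ 2 * (M * l) := by
          gcongr; exact Nat.totient_le l
      _ = M * (l : ℝ)⁻¹ := by rw [div_pow, hμ]; field
  · simp [moebius_eq_zero_of_not_squarefree hsq]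

end SieveWeight

section PrimitiveCharacters

/-- The primitive Dirichlet characters of conductor at most `Q`, each paired with its conductor. -/
noncomputable def primitiveCharacters (Q : ℕ) : Finset (Σ r, DirichletCharacter ℂ r) :=
  (Icc 1 Q).sigma fun r ↦ (Set.toFinite {χ : DirichletCharacter ℂ r | χ.IsPrimitive}).toFinset

lemma mem_primitiveCharacters {Q : ℕ} {χ : Σ r, DirichletCharacter ℂ r} :
    χ ∈ primitiveCharacters Q ↔ χ.1 ∈ Icc 1 Q ∧ χ.2.IsPrimitive := by
  simp [primitiveCharacters]

lemma sum_primitiveCharacters (Q : ℕ) (f : (Σ r, DirichletCharacter ℂ r) → ℝ) :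
    ∑ χ ∈ primitiveCharacters Q, f χ =
      ∑ r ∈ Icc 1 Q, ∑' χ : {χ : DirichletCharacter ℂ r // χ.IsPrimitive}, f ⟨r, χ⟩ := by
  rw [primitiveCharacters, sum_sigma]
  refine sum_congr rfl fun r _ ↦ ?_
  have := Fintype.ofFinite {χ : DirichletCharacter ℂ r // χ.IsPrimitive}
  rw [tsum_fintype, sum_subtype (p := DirichletCharacter.IsPrimitive) _ (by simp)]

lemma card_primitiveCharacters_le (Q : ℕ) : #(primitiveCharacters Q) ≤ Q ^ 2 := by
  have fiber_le {r : ℕ} (hr : r ∈ Icc 1 Q) :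
      #(Set.toFinite {χ : DirichletCharacter ℂ r | χ.IsPrimitive}).toFinset ≤ Q := by
    obtain ⟨hr1, hrQ⟩ := mem_Icc.mp hr
    have : NeZero r := ⟨by omega⟩
    calc _ ≤ Nat.card (DirichletCharacter ℂ r) := by
          rw [← Set.ncard_eq_toFinset_card]
          exact Set.ncard_le_card _
      _ = r.totient := DirichletCharacter.card_eq_totient_of_hasEnoughRootsOfUnity ℂ r
      _ ≤ Q := (Nat.totient_le r).trans hrQ
  rw [primitiveCharacters, card_sigma, sq]
  simpa using sum_le_card_nsmul _ _ Q fun r ↦ fiber_le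

variable {M r r' : ℕ}

lemma norm_apply_cast_unit (hr : r ∣ M) (χ : DirichletCharacter ℂ r) (u : (ZMod M)ˣ) :
    ‖χ (u : ZMod M).cast‖ = 1 := by
  simpa using χ.unit_norm_eq_one (Units.map (ZMod.castHom hr (ZMod r)).toMonoidHom u)

variable [NeZero M]

lemma exists_unit_apply_cast_ne_of_isPrimitive (hr : r ∣ M) (hr' : r' ∣ M)
    {χ : DirichletCharacter ℂ r} {χ' : DirichletCharacter ℂ r'} (hχ : χ.IsPrimitive)
    (hχ' : χ'.IsPrimitive)
    (hne : (⟨r, χ⟩ : Σ r, DirichletCharacter ℂ r) ≠ ⟨r', χ'⟩) :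
    ∃ u : (ZMod M)ˣ, χ (u : ZMod M).cast ≠ χ' (u : ZMod M).cast := by
  by_contra! h
  have changeLevel_eq : χ.changeLevel hr = χ'.changeLevel hr' := MulChar.ext fun u ↦ by
    rw [DirichletCharacter.changeLevel_eq_cast_of_dvd,
      DirichletCharacter.changeLevel_eq_cast_of_dvd, h u]
  obtain rfl : r = r' := by
    rw [← hχ, ← hχ', ← DirichletCharacter.conductor_changeLevel χ hr, changeLevel_eq,
      DirichletCharacter.conductor_changeLevel]
  exact hne (by rw [DirichletCharacter.changeLevel_injective hr changeLevel_eq])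

theorem sum_mul_apply_cast_mul_conj_eq_zero (hr : r ∣ M) (hr' : r' ∣ M)
    {χ : DirichletCharacter ℂ r} {χ' : DirichletCharacter ℂ r'} (hχ : χ.IsPrimitive)
    (hχ' : χ'.IsPrimitive) (hne : (⟨r, χ⟩ : Σ r, DirichletCharacter ℂ r) ≠ ⟨r', χ'⟩)
    {w : ZMod M → ℂ} (hw : ∀ (u : (ZMod M)ˣ) x, w (u * x) = w x) :
    ∑ x : ZMod M, w x * χ x.cast * conj (w x * χ' x.cast) = 0 := by
  obtain ⟨u, hu⟩ := exists_unit_apply_cast_ne_of_isPrimitive hr hr' hχ hχ' hne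
  have ratio_ne : χ (u : ZMod M).cast * conj (χ' (u : ZMod M).cast) ≠ 1 := by
    have hχ'u := norm_apply_cast_unit hr' χ' u
    rw [← Complex.inv_eq_conj hχ'u, ← div_eq_mul_inv]
    exact fun h ↦ hu ((div_eq_one_iff_eq (norm_ne_zero_iff.mp (by simp [hχ'u]))).mp h)
  refine sum_eq_zero_of_comp_equiv_eq_mul (Units.mulLeft u) ratio_ne fun x ↦ ?_
  simp only [Units.mulLeft_apply, hw, ZMod.cast_mul hr, ZMod.cast_mul hr', map_mul]
  ring

end PrimitiveCharacters

section WeightedCharacters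

variable {M K Q z : ℕ} [NeZero M]

lemma sum_weight_mul_conj (hz : ∀ l ∈ Icc 1 z, l ∣ M) (hK : K * (z * Q) ^ 2 ≤ M)
    {r r' : ℕ} (hr : r ∣ M) (hr' : r' ∣ M) (hrQ : r ≤ Q) (hrQ' : r' ≤ Q)
    (f : ZMod r → ℂ) (g : ZMod r' → ℂ) :
    ∑ x, dirichletKernel K x * sieveWeight M z x * f x.cast *
        conj (dirichletKernel K x * sieveWeight M z x * g x.cast) =
      K * ∑ x, sieveWeight M z x * f x.cast * conj (sieveWeight M z x * g x.cast) := by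
  have assoc (x : ZMod M) (c : ℂ) : dirichletKernel K x * sieveWeight M z x * c =
      dirichletKernel K x * (sieveWeight M z x * c) := mul_assoc _ _ _
  simp only [assoc]
  exact sum_dirichletKernel_mul_conj_of_mem_boundedPeriod hK
    (sieveWeight_mul_mem_boundedPeriod hz hr (by gcongr) f)
    (sieveWeight_mul_mem_boundedPeriod hz hr' (by gcongr) g)

lemma sum_norm_weight_mul_sq_le (hz : ∀ l ∈ Icc 1 z, l ∣ M) (hK : K * (z * Q) ^ 2 ≤ M)
    {r : ℕ} (hr : r ∣ M) (hrQ : r ≤ Q) (χ : DirichletCharacter ℂ r) :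
    ∑ x : ZMod M, ‖dirichletKernel K x * sieveWeight M z x * χ x.cast‖ ^ 2 ≤
      K * (M * squarefreeHarmonic z) := by
  have kernel_removed : ∑ x : ZMod M, ‖dirichletKernel K x * sieveWeight M z x * χ x.cast‖ ^ 2 =
      K * ∑ x : ZMod M, ‖sieveWeight M z x * χ x.cast‖ ^ 2 := by
    have := sum_weight_mul_conj hz hK hr hr hrQ hrQ χ χ
    simp only [Complex.mul_conj'] at this
    exact_mod_cast this
  rw [kernel_removed]
  gcongr
  refine le_trans (sum_le_sum fun x _ ↦ ?_) (sum_norm_sieveWeight_sq_le hz)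
  rw [norm_mul]
  gcongr
  exact mul_le_of_le_one_right (norm_nonneg _) (χ.norm_le_one _)

lemma sum_primitiveCharacters_norm_sum_cast_sq_le (hz : ∀ l ∈ Icc 1 z, l ∣ M)
    (hQ : ∀ r ∈ Icc 1 Q, r ∣ M) (hK : K * (z * Q) ^ 2 ≤ M) (hK0 : 0 < K) (hz0 : 0 < z)
    {P : Finset (ZMod M)} (hP : ∀ x ∈ P, K / 2 * squarefreeHarmonic z ≤
      ‖dirichletKernel K x * sieveWeight M z x‖) (a : ZMod M → ℂ) :
    ∑ χ ∈ primitiveCharacters Q, ‖∑ x ∈ P, a x * χ.2 x.cast‖ ^ 2 ≤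
      4 * M / (K * squarefreeHarmonic z) * ∑ x ∈ P, ‖a x‖ ^ 2 := by
  have hL := squarefreeHarmonic_pos hz0
  have constant_eq : (4 * M / (K * squarefreeHarmonic z) : ℝ) =
      K * (M * squarefreeHarmonic z) / (K / 2 * squarefreeHarmonic z) ^ 2 := by field
  rw [constant_eq]
  refine sum_norm_sum_mul_sq_le_of_orthogonal (s := primitiveCharacters Q)
    (h := fun x ↦ dirichletKernel K x * sieveWeight M z x) (v := fun χ x ↦ χ.2 x.cast)
    (by positivity) (by positivity) (fun χ hχ χ' hχ' hne ↦ ?_) (fun χ hχ ↦ ?_) hP a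
  · obtain ⟨hr, hχ⟩ := mem_primitiveCharacters.mp hχ
    obtain ⟨hr', hχ'⟩ := mem_primitiveCharacters.mp hχ'
    rw [sum_weight_mul_conj hz hK (hQ _ hr) (hQ _ hr') (mem_Icc.mp hr).2 (mem_Icc.mp hr').2,
      sum_mul_apply_cast_mul_conj_eq_zero (hQ _ hr) (hQ _ hr') hχ hχ' hne
        (sieveWeight_units_mul hz), mul_zero]
  · have hr := (mem_primitiveCharacters.mp hχ).1
    exact sum_norm_weight_mul_sq_le hz hK (hQ _ hr) (mem_Icc.mp hr).2 χ.2

lemma sum_primitiveCharacters_norm_sum_sq_le_of_dvd (hz : ∀ l ∈ Icc 1 z, l ∣ M)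
    (hQ : ∀ r ∈ Icc 1 Q, r ∣ M) (hK : K * (z * Q) ^ 2 ≤ M) (hK0 : 0 < K) (hz0 : 0 < z)
    {P : Finset ℕ} (hPM : ∀ n ∈ P, 6 * (K * n) ≤ M)
    (hPz : ∀ n ∈ P, ∀ l ∈ Icc 1 z, n.Coprime l) (a : ℕ → ℂ) :
    ∑ χ ∈ primitiveCharacters Q, ‖∑ n ∈ P, a n * χ.2 n‖ ^ 2 ≤
      4 * M / (K * squarefreeHarmonic z) * ∑ n ∈ P, ‖a n‖ ^ 2 := by
  have val_cast {n : ℕ} (hn : n ∈ P) : (n : ZMod M).val = n :=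
    ZMod.val_cast_of_lt (by nlinarith [hPM n hn, NeZero.pos M])
  have cast_injOn : Set.InjOn (Nat.cast : ℕ → ZMod M) P := fun m hm n hn h ↦ by
    rw [← val_cast hm, ← val_cast hn, h]
  have characterSum_eq {χ} (hχ : χ ∈ primitiveCharacters Q) :
      ∑ x ∈ P.image (Nat.cast : ℕ → ZMod M), a x.val * χ.2 x.cast = ∑ n ∈ P, a n * χ.2 n := by
    rw [sum_image cast_injOn]
    refine sum_congr rfl fun n hn ↦ ?_
    rw [val_cast hn, ZMod.cast_natCast (hQ _ (mem_primitiveCharacters.mp hχ).1)]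
  have coefficientSum_eq :
      ∑ x ∈ P.image (Nat.cast : ℕ → ZMod M), ‖a x.val‖ ^ 2 = ∑ n ∈ P, ‖a n‖ ^ 2 := by
    rw [sum_image cast_injOn]
    exact sum_congr rfl fun n hn ↦ by rw [val_cast hn]
  rw [← coefficientSum_eq, sum_congr rfl fun χ hχ ↦ by rw [← characterSum_eq hχ]]
  refine sum_primitiveCharacters_norm_sum_cast_sq_le hz hQ hK hK0 hz0 (fun x hx ↦ ?_)
    fun x ↦ a x.val
  obtain ⟨n, hn, rfl⟩ := mem_image.mp hx
  have hL := squarefreeHarmonic_pos hz0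
  rw [norm_mul, sieveWeight_natCast_of_coprime hz (hPz n hn), Complex.norm_real,
    Real.norm_of_nonneg hL.le]
  gcongr
  exact half_le_norm_dirichletKernel_natCast (hPM n hn)

theorem sum_primitiveCharacters_norm_sum_sq_le {N Q z : ℕ} (hN : 0 < N) (hz : 0 < z)
    {P : Finset ℕ} (hPN : ∀ n ∈ P, n ≤ N) (hPz : ∀ n ∈ P, ∀ l ∈ Icc 1 z, n.Coprime l)
    (a : ℕ → ℂ) :
    ∑ χ ∈ primitiveCharacters Q, ‖∑ n ∈ P, a n * χ.2 n‖ ^ 2 ≤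
      24 * (N + (z * Q : ℝ) ^ 2) / squarefreeHarmonic z * ∑ n ∈ P, ‖a n‖ ^ 2 := by
  set K := z.factorial * Q.factorial
  have hK : 0 < K := by positivity
  set M := 6 * (K * (N + (z * Q) ^ 2)) with hM_def
  have : NeZero M := ⟨by positivity⟩
  have hKM : K ∣ M := ⟨6 * (N + (z * Q) ^ 2), by rw [hM_def]; ring⟩
  have hz_dvd : ∀ l ∈ Icc 1 z, l ∣ M := fun l hl ↦
    ((Nat.dvd_factorial (mem_Icc.mp hl).1 (mem_Icc.mp hl).2).mul_right _).trans hKM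
  have hQ_dvd : ∀ r ∈ Icc 1 Q, r ∣ M := fun r hr ↦
    ((Nat.dvd_factorial (mem_Icc.mp hr).1 (mem_Icc.mp hr).2).mul_left _).trans hKM
  have hKB : K * (z * Q) ^ 2 ≤ M := by rw [hM_def]; nlinarith [Nat.zero_le (K * N)]
  have hPM : ∀ n ∈ P, 6 * (K * n) ≤ M := fun n hn ↦ by
    rw [hM_def]; gcongr; exact (hPN n hn).trans (Nat.le_add_right _ _)
  have hL := squarefreeHarmonic_pos hz
  convert sum_primitiveCharacters_norm_sum_sq_le_of_dvd hz_dvd hQ_dvd hKB hK hz hPM hPz a using 2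
  rw [hM_def]
  push_cast
  field

end WeightedCharacters

section Primes

lemma log_le_two_mul_sqrt {x : ℝ} (hx : 0 ≤ x) : Real.log x ≤ 2 * √x := by
  have := Real.log_le_rpow_div hx one_half_pos
  rw [← Real.sqrt_eq_rpow] at this
  linarith

lemma log_sq_le_four_mul {x : ℝ} (hx : 1 ≤ x) : Real.log x ^ 2 ≤ 4 * x := by
  have hx0 : 0 ≤ x := by linarith
  calc Real.log x ^ 2 ≤ (2 * √x) ^ 2 := by
        gcongr
        · exact Real.log_nonneg hx
        · exact log_le_two_mul_sqrt hx0
    _ = 4 * x := by rw [mul_pow, Real.sq_sqrt hx0]; norm_num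

lemma primeCounting_le_eight_mul_div_log {N : ℕ} (hN : 2 ≤ N) :
    (N.primeCounting : ℝ) ≤ 8 * N / Real.log N := by
  have hN1 : (1 : ℝ) < N := by exact_mod_cast hN
  have hlog : 0 < Real.log N := Real.log_pos hN1
  have log_four_le : Real.log 4 ≤ 3 := by
    linarith [Real.log_le_sub_one_of_pos (zero_lt_four' ℝ)]
  have sqrt_le : √(N : ℝ) ≤ 2 * N / Real.log N := by
    rw [le_div_iff₀ hlog]
    nlinarith [log_le_two_mul_sqrt N.cast_nonneg, Real.mul_self_sqrt (N.cast_nonneg (α := ℝ)),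
      Real.sqrt_nonneg (N : ℝ)]
  calc (N.primeCounting : ℝ) ≤ Real.log 4 * N / Real.log √N + √N := by
        simpa using Chebyshev.pi_le_log4_mul_div hN1
    _ ≤ 3 * N / (Real.log N / 2) + 2 * N / Real.log N := by
        rw [Real.log_sqrt N.cast_nonneg]; gcongr
    _ = 8 * N / Real.log N := by field

lemma norm_sum_sq_le_two_mul_filter_lt_add {s : Finset ℕ} (hs : ∀ n ∈ s, 0 < n) {f : ℕ → ℂ}
    (hf : ∀ n, ‖f n‖ ≤ 1) (z : ℕ) :
    ‖∑ n ∈ s, f n‖ ^ 2 ≤ 2 * ‖∑ n ∈ s with z < n, f n‖ ^ 2 + 2 * (z : ℝ) ^ 2 := by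
  have small_subset : {n ∈ s | ¬ z < n} ⊆ Icc 1 z := fun n hn ↦ by
    obtain ⟨hns, hnz⟩ := mem_filter.mp hn
    exact mem_Icc.mpr ⟨hs n hns, not_lt.mp hnz⟩
  have small_le : ‖∑ n ∈ s with ¬ z < n, f n‖ ≤ z :=
    calc ‖∑ n ∈ s with ¬ z < n, f n‖ ≤ ∑ n ∈ s with ¬ z < n, (1 : ℝ) :=
          norm_sum_le_of_le _ fun n _ ↦ hf n
      _ = #{n ∈ s | ¬ z < n} := by simp
      _ ≤ z := by exact_mod_cast (card_le_card small_subset).trans_eq (by simp)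
  rw [← sum_filter_add_sum_filter_not s (z < ·), ← mul_add]
  calc _ ≤ (‖∑ n ∈ s with z < n, f n‖ + z) ^ 2 := by
        gcongr; exact (norm_add_le _ _).trans (by gcongr)
    _ ≤ _ := add_sq_le

theorem sum_primitiveCharacters_norm_sum_primesLE_sq_le {N Q z : ℕ} (hN : 0 < N) (hz : 0 < z)
    (hzQ : (z * Q : ℝ) ^ 2 ≤ N) :
    ∑ χ ∈ primitiveCharacters Q, ‖∑ q ∈ N.primesLE, χ.2 q‖ ^ 2 ≤
      96 * N / squarefreeHarmonic z * N.primeCounting + 2 * N := by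
  have hL := squarefreeHarmonic_pos hz
  have large_le : ∑ χ ∈ primitiveCharacters Q, ‖∑ q ∈ N.primesLE with z < q, χ.2 q‖ ^ 2 ≤
      24 * (N + N) / squarefreeHarmonic z * N.primeCounting := by
    have sieve := sum_primitiveCharacters_norm_sum_sq_le (Q := Q) hN hz
      (P := {q ∈ N.primesLE | z < q}) (fun q hq ↦ Nat.le_of_mem_primesLE (mem_filter.mp hq).1)
      (fun q hq l hl ↦ Nat.coprime_of_lt_prime (by grind) (by grind)
        (Nat.prime_of_mem_primesLE (mem_filter.mp hq).1)) 1
    simp only [Pi.one_apply, one_mul, norm_one, one_pow, sum_const, nsmul_one] at sieve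
    refine sieve.trans ?_
    gcongr
    exact (card_filter_le _ _).trans_eq N.primesLE_card_eq_primeCounting
  have card_mul_sq_le : #(primitiveCharacters Q) * (z : ℝ) ^ 2 ≤ (N : ℝ) :=
    calc #(primitiveCharacters Q) * (z : ℝ) ^ 2 ≤ (Q ^ 2 : ℕ) * (z : ℝ) ^ 2 := by
          gcongr; exact card_primitiveCharacters_le Q
      _ ≤ (N : ℝ) := by push_cast; linarith
  calc _ ≤ ∑ χ ∈ primitiveCharacters Q,
        (2 * ‖∑ q ∈ N.primesLE with z < q, χ.2 q‖ ^ 2 + 2 * (z : ℝ) ^ 2) := sum_le_sum fun χ _ ↦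
          norm_sum_sq_le_two_mul_filter_lt_add (fun q hq ↦ (Nat.prime_of_mem_primesLE hq).pos)
            (fun q ↦ χ.2.norm_le_one q) z
    _ = 2 * ∑ χ ∈ primitiveCharacters Q, ‖∑ q ∈ N.primesLE with z < q, χ.2 q‖ ^ 2 +
          2 * (#(primitiveCharacters Q) * (z : ℝ) ^ 2) := by
        rw [sum_add_distrib, ← mul_sum, sum_const, nsmul_eq_mul]; ring
    _ ≤ 2 * (24 * (N + N) / squarefreeHarmonic z * N.primeCounting) + 2 * N := by gcongr
    _ = _ := by ring

lemma natFloor_rpow_mul_natFloor_rpow_sq_le {x : ℝ} (hx : 0 < x) (ε : ℝ) :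
    (⌊x ^ ε⌋₊ * ⌊x ^ (1 / 2 - ε)⌋₊ : ℝ) ^ 2 ≤ x :=
  calc (⌊x ^ ε⌋₊ * ⌊x ^ (1 / 2 - ε)⌋₊ : ℝ) ^ 2 ≤ (x ^ ε * x ^ (1 / 2 - ε)) ^ 2 := by
        gcongr <;> exact Nat.floor_le (by positivity)
    _ = x := by
        rw [← Real.rpow_add hx, add_sub_cancel, ← Real.sqrt_eq_rpow, Real.sq_sqrt hx.le]

lemma mul_log_le_two_mul_squarefreeHarmonic {x : ℝ} (hx : 0 < x) (ε : ℝ) :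
    ε * Real.log x ≤ 2 * squarefreeHarmonic ⌊x ^ ε⌋₊ := by
  rw [← Real.log_rpow hx]
  refine le_trans ?_ (log_add_one_le_two_mul_squarefreeHarmonic _)
  push_cast
  gcongr
  exact (Nat.lt_floor_add_one _).le

lemma filter_Icc_le_rpow {N : ℕ} (hN : 0 < N) {t : ℝ} (ht : t ≤ 1) :
    (Icc 1 N).filter (fun r : ℕ ↦ (r : ℝ) ≤ (N : ℝ) ^ t) = Icc 1 ⌊(N : ℝ) ^ t⌋₊ := by
  have rpow_le : (N : ℝ) ^ t ≤ N := Real.rpow_le_self_of_one_le (by exact_mod_cast hN) ht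
  ext r
  rw [mem_filter, mem_Icc, mem_Icc, Nat.le_floor_iff (by positivity)]
  exact ⟨fun h ↦ ⟨h.1.1, h.2⟩, fun h ↦ ⟨⟨h.1, by exact_mod_cast h.2.trans rpow_le⟩, h.2⟩⟩

end Primes

end LargeSieve

open Classical in
/-- Large-sieve bound for character sums over primes:
`∑_{r ≤ N^{1/2-ε}} ∑_{χ mod r primitive} |∑_{q ≤ N prime} χ(q)|² ≪_ε N²/(log N)²`. -/
theorem stmt_18 (ε : ℝ) (hε : 0 < ε) :
    ∃ K : ℝ, 0 < K ∧ ∀ N : ℕ, 2 ≤ N →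
      (∑ r ∈ (Finset.Icc 1 N).filter (fun (r : ℕ) => (r : ℝ) ≤ (N : ℝ) ^ ((1 : ℝ) / 2 - ε)),
        ∑' χ : {χ : DirichletCharacter ℂ r // χ.IsPrimitive},
          ‖∑ q ∈ (Finset.range (N + 1)).filter Nat.Prime,
              (χ : DirichletCharacter ℂ r) (q : ZMod r)‖ ^ 2)
      ≤ K * (N : ℝ) ^ 2 / (Real.log N) ^ 2 := by
  refine ⟨1536 / ε + 8, by positivity, fun N hN ↦ ?_⟩
  have hN0 : (0 : ℝ) < N := by positivity
  have hN1 : (1 : ℝ) < N := by exact_mod_cast hN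
  have hlog : 0 < Real.log N := Real.log_pos hN1
  set z := ⌊(N : ℝ) ^ ε⌋₊
  have hz : 0 < z := Nat.floor_pos.mpr (Real.one_le_rpow hN1.le hε.le)
  have hL : ε * Real.log N / 2 ≤ LargeSieve.squarefreeHarmonic z := by
    linarith [LargeSieve.mul_log_le_two_mul_squarefreeHarmonic hN0 ε]
  have small_le : 2 * (N : ℝ) ≤ 8 * N ^ 2 / Real.log N ^ 2 := by
    rw [le_div_iff₀ (by positivity)]
    nlinarith [LargeSieve.log_sq_le_four_mul hN1.le]
  have sieve := LargeSieve.sum_primitiveCharacters_norm_sum_primesLE_sq_le (by omega) hz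
    (LargeSieve.natFloor_rpow_mul_natFloor_rpow_sq_le hN0 ε)
  rw [LargeSieve.sum_primitiveCharacters,
    ← LargeSieve.filter_Icc_le_rpow (by omega) (by linarith)] at sieve
  calc _ ≤ 96 * N / LargeSieve.squarefreeHarmonic z * N.primeCounting + 2 * N := sieve
    _ ≤ 96 * N / (ε * Real.log N / 2) * (8 * N / Real.log N) + 8 * N ^ 2 / Real.log N ^ 2 := by
        gcongr
        exact LargeSieve.primeCounting_le_eight_mul_div_log hN
    _ = _ := by field
end
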